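/- arXiv:1912.07572 — 11 statements merged into one kernel-verified Lean document; each statement's English description precedes it below -/
import Mathlib

section
/- Let α > 0, let w : ℝ → (0, ∞) be measurable, and let P and Q be Borel probability measures on ℝ whose distribution functions F_P(x) := P((-∞, x)) and F_Q(x) := Q((-∞, x)) take values in the open interval (0, 1) for every x ∈ ℝ. Then (as Lebesgue integrals with values in [0, ∞]) ∫_ℝ ( ∫_ℝ |F_Q(x) − 1_{y < x}|^{2α} / (F_Q(x)^α (1 − F_Q(x))^α) · w(x) dx ) dP(y) = ∫_ℝ [ ((1 − F_Q(x))/F_Q(x))^α · F_P(x) + (F_Q(x)/(1 − F_Q(x)))^α · (1 − F_P(x)) ] w(x) dx. -/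
/-!
For fixed `x` with `p = F_Q(x)`, the score integrand takes only two values as `y` varies:
`((1 - p) / p) ^ α` on `{y < x}`, an event of `P`-probability `F_P(x)`, and `(p / (1 - p)) ^ α` on
its complement. Since everything is nonnegative and jointly measurable, Tonelli's theorem
exchanges the two integrals, and the inner integral over `y` is then that of a two-valued function.
-/

open MeasureTheory

/-- The score integrand on the event `y < x`. -/
lemma score_lt (α p : ℝ) (hp : p ∈ Set.Ioo (0 : ℝ) 1) :
    |p - 1| ^ (2 * α) / (p ^ α * (1 - p) ^ α) = ((1 - p) / p) ^ α := by
  obtain ⟨h0, h1⟩ := hp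
  have h2 : 0 < 1 - p := by linarith
  have h3 := (Real.rpow_pos_of_pos h0 α).ne'
  have h4 := (Real.rpow_pos_of_pos h2 α).ne'
  rw [abs_sub_comm, abs_of_pos h2, two_mul, Real.rpow_add h2, Real.div_rpow h2.le h0.le]
  field_simp

/-- The score integrand on the event `x ≤ y`. -/
lemma score_ge (α p : ℝ) (hp : p ∈ Set.Ioo (0 : ℝ) 1) :
    |p - 0| ^ (2 * α) / (p ^ α * (1 - p) ^ α) = (p / (1 - p)) ^ α := by
  obtain ⟨h0, h1⟩ := hp
  have h2 : 0 < 1 - p := by linarith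
  have h3 := (Real.rpow_pos_of_pos h0 α).ne'
  have h4 := (Real.rpow_pos_of_pos h2 α).ne'
  rw [sub_zero, abs_of_pos h0, two_mul, Real.rpow_add h0, Real.div_rpow h0.le h2.le]
  field_simp

/-- The expected score of `S̃_{α,w}(Q, ·)` under `P` equals
`∫ ( ((1-F_Q)/F_Q)^α F_P + (F_Q/(1-F_Q))^α (1-F_P) ) w dx`. -/
theorem expected_score_formula (α : ℝ) (hα : 0 < α)
    (w : ℝ → ℝ) (hw : Measurable w) (hwpos : ∀ x, 0 < w x)
    (P Q : Measure ℝ) [IsProbabilityMeasure P] [IsProbabilityMeasure Q]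
    (FP FQ : ℝ → ℝ)
    (hFP : ∀ x, FP x = (P (Set.Iio x)).toReal)
    (hFQ : ∀ x, FQ x = (Q (Set.Iio x)).toReal)
    (hFP01 : ∀ x, FP x ∈ Set.Ioo (0 : ℝ) 1)
    (hFQ01 : ∀ x, FQ x ∈ Set.Ioo (0 : ℝ) 1) :
    ∫⁻ y, (∫⁻ x, ENNReal.ofReal
        (|FQ x - (if y < x then (1 : ℝ) else 0)| ^ (2 * α)
          / ((FQ x) ^ α * (1 - FQ x) ^ α) * w x)) ∂P
      = ∫⁻ x, ENNReal.ofReal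
          ((((1 - FQ x) / FQ x) ^ α * FP x
            + (FQ x / (1 - FQ x)) ^ α * (1 - FP x)) * w x) := by
  have hm : Measurable FQ := by
    apply Monotone.measurable
    intro a b hab
    rw [hFQ, hFQ]
    exact ENNReal.toReal_mono (measure_ne_top _ _) (measure_mono (Set.Iio_subset_Iio hab))
  have hmeas : Measurable (fun z : ℝ × ℝ => ENNReal.ofReal
        (|FQ z.2 - (if z.1 < z.2 then (1 : ℝ) else 0)| ^ (2 * α)
          / ((FQ z.2) ^ α * (1 - FQ z.2) ^ α) * w z.2)) := by
    have hi : Measurable (fun z : ℝ × ℝ => if z.1 < z.2 then (1 : ℝ) else 0) :=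
      Measurable.ite (measurableSet_lt measurable_fst measurable_snd)
        measurable_const measurable_const
    have hd : Measurable (fun z : ℝ × ℝ => FQ z.2 - (if z.1 < z.2 then (1 : ℝ) else 0)) :=
      (hm.comp measurable_snd).sub hi
    have ha : Measurable (fun z : ℝ × ℝ => |FQ z.2 - (if z.1 < z.2 then (1 : ℝ) else 0)|) :=
      continuous_abs.measurable.comp hd
    fun_prop
  rw [lintegral_lintegral_swap hmeas.aemeasurable]
  refine lintegral_congr fun x => ?_
  obtain ⟨h0, h1⟩ := hFQ01 x
  have h2 : 0 < 1 - FQ x := by linarith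
  obtain ⟨hP0, hP1⟩ := hFP01 x
  have hP2 : 0 < 1 - FP x := by linarith
  have hA : 0 < ((1 - FQ x) / FQ x) ^ α := Real.rpow_pos_of_pos (div_pos h2 h0) α
  have hB : 0 < (FQ x / (1 - FQ x)) ^ α := Real.rpow_pos_of_pos (div_pos h0 h2) α
  have hlt : P (Set.Iio x) = ENNReal.ofReal (FP x) := by
    rw [hFP, ENNReal.ofReal_toReal (measure_ne_top _ _)]
  have hge : P (Set.Iio x)ᶜ = ENNReal.ofReal (1 - FP x) := by
    rw [prob_compl_eq_one_sub measurableSet_Iio, hlt, ENNReal.ofReal_sub _ hP0.le,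
      ENNReal.ofReal_one]
  rw [← lintegral_add_compl _ (measurableSet_Iio (a := x)),
    setLIntegral_congr_fun (g := fun _ => ENNReal.ofReal (((1 - FQ x) / FQ x) ^ α * w x))
      measurableSet_Iio ?_,
    setLIntegral_congr_fun (g := fun _ => ENNReal.ofReal ((FQ x / (1 - FQ x)) ^ α * w x))
      measurableSet_Iio.compl ?_,
    setLIntegral_const, setLIntegral_const, hlt, hge,
    ← ENNReal.ofReal_mul (mul_pos hA (hwpos x)).le,
    ← ENNReal.ofReal_mul (mul_pos hB (hwpos x)).le,
    ← ENNReal.ofReal_add (mul_pos (mul_pos hA (hwpos x)) hP0).le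
      (mul_pos (mul_pos hB (hwpos x)) hP2).le]
  · congr 1
    ring
  · intro y hy
    have hy' : ¬ y < x := hy
    simp only [if_neg hy', score_ge α _ (hFQ01 x)]
  · intro y hy
    have hy' : y < x := hy
    simp only [if_pos hy', score_lt α _ (hFQ01 x)]
end

section
/- Let α > 0 and p ∈ (0, 1). Define g : (0, 1) → ℝ by g(q) := ((1 − q)/q)^α · p + (q/(1 − q))^α · (1 − p), and set q* := (1 + ((1 − p)/p)^{1/(2α)})^{-1}. Then q* ∈ (0, 1) and g(q*) ≤ g(q) for all q ∈ (0, 1). -/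
/-!
With `t = ((1 - q) / q) ^ α > 0` the objective is `t * p + t⁻¹ * (1 - p)`. By AM-GM it is at least
`2 * s * p`, where `s ^ 2 = (1 - p) / p`, with equality at `t = s`; the point `qs` is exactly the
one whose odds ratio `(1 - qs) / qs` has `α`-th power `s`.
-/

/-- For `α > 0` and `p ∈ (0,1)`, the point `q* = (1 + ((1-p)/p)^(1/(2α)))⁻¹` lies in `(0,1)`
and minimizes `g(q) = ((1-q)/q)^α p + (q/(1-q))^α (1-p)` over `(0,1)`. -/
theorem qstar_minimizes (α p : ℝ) (hα : 0 < α) (hp : p ∈ Set.Ioo (0 : ℝ) 1)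
    (g : ℝ → ℝ)
    (hg : ∀ q, g q = ((1 - q) / q) ^ α * p + (q / (1 - q)) ^ α * (1 - p))
    (qs : ℝ) (hqs : qs = (1 + ((1 - p) / p) ^ (1 / (2 * α)))⁻¹) :
    qs ∈ Set.Ioo (0 : ℝ) 1 ∧ ∀ q ∈ Set.Ioo (0 : ℝ) 1, g qs ≤ g q := by
  obtain ⟨hp0, hp1⟩ := hp
  have hc : 0 < (1 - p) / p := div_pos (by linarith) hp0
  set r := ((1 - p) / p) ^ (1 / (2 * α)) with hr
  have hr0 : 0 < r := Real.rpow_pos_of_pos hc _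
  have hs0 : 0 < r ^ α := Real.rpow_pos_of_pos hr0 _
  have hs2 : (r ^ α) ^ 2 * p = 1 - p := by
    have h : (r ^ α) ^ 2 = (1 - p) / p := by
      rw [← Real.rpow_natCast, ← Real.rpow_mul hr0.le, hr, ← Real.rpow_mul hc.le]
      have e : 1 / (2 * α) * (α * ((2 : ℕ) : ℝ)) = 1 := by
        push_cast
        field_simp
      rw [e, Real.rpow_one]
    rw [h]
    field_simp
  have hq : qs ∈ Set.Ioo (0 : ℝ) 1 := by
    rw [hqs]
    exact ⟨by positivity, inv_lt_one_of_one_lt₀ (by linarith)⟩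
  have hodds : (1 - qs) / qs = r := by
    rw [hqs]
    field_simp
    ring
  have key : ∀ q ∈ Set.Ioo (0 : ℝ) 1,
      g q = ((1 - q) / q) ^ α * p + (((1 - q) / q) ^ α)⁻¹ * (1 - p) := by
    rintro q ⟨h0, h1⟩
    rw [hg, ← Real.inv_rpow (div_pos (by linarith) h0).le, inv_div]
  refine ⟨hq, fun q hq' => ?_⟩
  rw [key qs hq, key q hq', hodds]
  have ht : 0 < ((1 - q) / q) ^ α :=
    Real.rpow_pos_of_pos (div_pos (by linarith [hq'.2]) hq'.1) _
  generalize ((1 - q) / q) ^ α = t at ht ⊢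
  generalize r ^ α = s at hs0 hs2 ⊢
  rw [← hs2, ← sub_nonneg]
  have e : t * p + t⁻¹ * (s ^ 2 * p) - (s * p + s⁻¹ * (s ^ 2 * p)) = p * (t - s) ^ 2 / t := by
    field_simp
    ring
  rw [e]
  positivity
end

section
/- Let α ≥ 1 and p ∈ (0, 1). Then the function g : (0, 1) → ℝ, g(q) := ((1 − q)/q)^α · p + (q/(1 − q))^α · (1 − p), is strictly convex on (0, 1). -/
/-!
Since `(1 - q) / q = q⁻¹ - 1`, the map `q ↦ (1 - q) / q` is positive and strictly convex on `(0, 1)`.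
For `α ≥ 1` the power `t ↦ t ^ α` is convex and strictly increasing on `[0, ∞)`, so composing with
it preserves strict convexity. The second summand of `g` is the reflection under `q ↦ 1 - q` of a
function of the same form, and both weights `p`, `1 - p` are positive.
-/

lemma strictConvexOn_one_sub_div :
    StrictConvexOn ℝ (Set.Ioo (0 : ℝ) 1) (fun q => (1 - q) / q) := by
  have h : StrictConvexOn ℝ (Set.Ioo (0 : ℝ) 1) (fun q => q ^ (-1 : ℤ) + (-1 : ℝ)) :=
    ((strictConvexOn_zpow (by norm_num) (by norm_num)).subset
      (fun _ hq => hq.1) (convex_Ioo 0 1)).add_const (-1)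
  refine h.congr fun q hq => ?_
  have : q ≠ 0 := hq.1.ne'
  simp only [zpow_neg_one]
  field_simp
  ring

lemma StrictConvexOn.rpow_of_nonneg {s : Set ℝ} {f : ℝ → ℝ} {α : ℝ}
    (hf : StrictConvexOn ℝ s f) (hf0 : ∀ x ∈ s, 0 ≤ f x) (hα : 1 ≤ α) :
    StrictConvexOn ℝ s (fun x => f x ^ α) := by
  refine ⟨hf.1, fun x hx y hy hxy a b ha hb hab => ?_⟩
  exact (Real.rpow_lt_rpow (hf0 _ (hf.1 hx hy ha.le hb.le hab))
    (hf.2 hx hy hxy ha hb hab) (by linarith)).trans_le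
    ((convexOn_rpow hα).2 (hf0 x hx) (hf0 y hy) ha.le hb.le hab)

/-- For `α ≥ 1` and `p ∈ (0,1)`, the function
`g(q) = ((1-q)/q)^α p + (q/(1-q))^α (1-p)` is strictly convex on `(0,1)`. -/
theorem g_strictConvexOn (α p : ℝ) (hα : 1 ≤ α) (hp : p ∈ Set.Ioo (0 : ℝ) 1)
    (g : ℝ → ℝ)
    (hg : ∀ q, g q = ((1 - q) / q) ^ α * p + (q / (1 - q)) ^ α * (1 - p)) :
    StrictConvexOn ℝ (Set.Ioo (0 : ℝ) 1) g := by
  have h := strictConvexOn_one_sub_div.rpow_of_nonneg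
    (fun x hx => div_nonneg (sub_nonneg.2 hx.2.le) hx.1.le) hα
  refine ⟨convex_Ioo 0 1, fun x hx y hy hxy a b ha hb hab => ?_⟩
  have h1 := h.2 hx hy hxy ha hb hab
  have h2 := h.2 (x := 1 - x) ⟨sub_pos.2 hx.2, sub_lt_self 1 hx.1⟩
    (y := 1 - y) ⟨sub_pos.2 hy.2, sub_lt_self 1 hy.1⟩ (fun e => hxy (by linarith)) ha hb hab
  have e : a * (1 - x) + b * (1 - y) = 1 - (a * x + b * y) := by
    linear_combination hab
  simp only [smul_eq_mul, e, sub_sub_cancel] at h1 h2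
  simp only [smul_eq_mul, hg]
  have h3 := mul_lt_mul_of_pos_right h1 hp.1
  have h4 := mul_lt_mul_of_pos_right h2 (sub_pos.2 hp.2)
  linarith
end

section
/- Let α > 0 and p ∈ (0, 1), and set q* := (1 + ((1 − p)/p)^{1/(2α)})^{-1}. Then the function g : (0, 1) → ℝ, g(q) := ((1 − q)/q)^α · p + (q/(1 − q))^α · (1 − p), is twice differentiable at q* and its second derivative at q* equals 2α² · p · ((1 − q*)/q*)^{α−2} / (q*)⁴; in particular this second derivative is strictly positive. -/
/-!
With the odds `u = (1 - q) / q`, whose logarithmic derivative is `-1 / (q (1 - q))`, one has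
`g = p u ^ α + (1 - p) u ^ (-α)` and `g' = α (p u ^ α - (1 - p) u ^ (-α)) · (-1 / (q (1 - q)))`
on `(0, 1)`. At `q*` the two terms `p u ^ α` and `(1 - p) u ^ (-α)` agree, so the middle factor
vanishes and only its derivative contributes:
`g'' = 2 α ^ 2 p u ^ α / (q (1 - q)) ^ 2 = 2 α ^ 2 p u ^ (α - 2) / q ^ 4`.
-/

lemma hasDerivAt_odds_rpow (β : ℝ) {q : ℝ} (h0 : 0 < q) (h1 : q < 1) :
    HasDerivAt (fun q : ℝ => ((1 - q) / q) ^ β)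
      (β * ((1 - q) / q) ^ β * (-1 / (q * (1 - q)))) q := by
  have h1' : 0 < 1 - q := by linarith
  have hu : 0 < (1 - q) / q := by positivity
  have hd : HasDerivAt (fun q : ℝ => (1 - q) / q) (-1 / q ^ 2) q := by
    refine (((hasDerivAt_id q).const_sub 1).div (hasDerivAt_id q) h0.ne').congr_deriv ?_
    simp only [id]
    ring
  refine (hd.rpow_const (p := β) (Or.inl hu.ne')).congr_deriv ?_
  rw [Real.rpow_sub_one hu.ne']
  field_simp

/-- With `A = p`, for `B = 1 - p` this is `g` on `(0, 1)`, and for `B = -(1 - p)` it is the factor of the derivative of `g`,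
up to the constant `α`, that vanishes at `q*`. -/
lemma hasDerivAt_odds_comb (α A B : ℝ) {q : ℝ} (h0 : 0 < q) (h1 : q < 1) :
    HasDerivAt (fun q : ℝ => ((1 - q) / q) ^ α * A + ((1 - q) / q) ^ (-α) * B)
      (α * (((1 - q) / q) ^ α * A + ((1 - q) / q) ^ (-α) * (-B)) * (-1 / (q * (1 - q)))) q := by
  refine (((hasDerivAt_odds_rpow α h0 h1).mul_const A).add
    ((hasDerivAt_odds_rpow (-α) h0 h1).mul_const B)).congr_deriv ?_
  ring

/-- For `α > 0` and `p ∈ (0,1)`, the function `g(q) = ((1-q)/q)^α p + (q/(1-q))^α (1-p)`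
is twice differentiable at `q* = (1 + ((1-p)/p)^(1/(2α)))⁻¹`, its second derivative there
equals `2 α² p ((1-q*)/q*)^(α-2) / (q*)⁴`, and this value is strictly positive. -/
theorem second_derivative_at_qstar (α p : ℝ) (hα : 0 < α) (hp : p ∈ Set.Ioo (0 : ℝ) 1)
    (g : ℝ → ℝ)
    (hg : ∀ q, g q = ((1 - q) / q) ^ α * p + (q / (1 - q)) ^ α * (1 - p))
    (qs : ℝ) (hqs : qs = (1 + ((1 - p) / p) ^ (1 / (2 * α)))⁻¹) :
    DifferentiableAt ℝ g qs ∧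
    HasDerivAt (deriv g) (2 * α ^ 2 * p * ((1 - qs) / qs) ^ (α - 2) / qs ^ 4) qs ∧
    0 < 2 * α ^ 2 * p * ((1 - qs) / qs) ^ (α - 2) / qs ^ 4 := by
  obtain ⟨hp0, hp1⟩ := hp
  have hp1' : 0 < 1 - p := by linarith
  have hc : 0 < (1 - p) / p := by positivity
  have hr : 0 < ((1 - p) / p) ^ (1 / (2 * α)) := Real.rpow_pos_of_pos hc _
  have h0 : 0 < qs := by rw [hqs]; positivity
  have h1 : qs < 1 := by rw [hqs]; exact inv_lt_one_of_one_lt₀ (by linarith)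
  have h1' : 0 < 1 - qs := by linarith
  have hu : 0 < (1 - qs) / qs := by positivity
  have hus : (1 - qs) / qs = ((1 - p) / p) ^ (1 / (2 * α)) := by
    rw [hqs]; field_simp; ring
  -- The two summands of `g` agree at `q*`, since `u ^ (2 α) = (1 - p) / p` there.
  have hbal : ((1 - qs) / qs) ^ (-α) * (1 - p) = ((1 - qs) / qs) ^ α * p := by
    have h2 : ((1 - qs) / qs) ^ α * ((1 - qs) / qs) ^ α = (1 - p) / p := by
      rw [← Real.rpow_add hu, hus, ← Real.rpow_mul hc.le]
      have : 1 / (2 * α) * (α + α) = 1 := by field_simp; ring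
      rw [this, Real.rpow_one]
    have hpos := Real.rpow_pos_of_pos hu α
    rw [Real.rpow_neg hu.le, inv_mul_eq_iff_eq_mul₀ hpos.ne', ← mul_assoc, h2,
      div_mul_cancel₀ _ hp0.ne']
  have hg' : ∀ q ∈ Set.Ioo (0 : ℝ) 1, HasDerivAt g
      (α * (((1 - q) / q) ^ α * p + ((1 - q) / q) ^ (-α) * (-(1 - p))) *
        (-1 / (q * (1 - q)))) q := by
    intro q hq
    refine (hasDerivAt_odds_comb α p (1 - p) hq.1 hq.2).congr_of_eventuallyEq ?_
    filter_upwards [Ioo_mem_nhds hq.1 hq.2] with x hx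
    have hx1 : 0 < 1 - x := by linarith [hx.2]
    have hx0 := hx.1
    rw [hg, Real.rpow_neg (by positivity), ← Real.inv_rpow (by positivity), inv_div]
  refine ⟨(hg' qs ⟨h0, h1⟩).differentiableAt, ?_, ?_⟩
  · have hw : DifferentiableAt ℝ (fun q : ℝ => -1 / (q * (1 - q))) qs := by
      refine (differentiableAt_const _).div (by fun_prop) (by positivity)
    have key := ((hasDerivAt_odds_comb α p (-(1 - p)) h0 h1).const_mul α).mul hw.hasDerivAt
    have hev : deriv g =ᶠ[nhds qs] fun q =>
        α * (((1 - q) / q) ^ α * p + ((1 - q) / q) ^ (-α) * (-(1 - p))) *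
          (-1 / (q * (1 - q))) := by
      filter_upwards [Ioo_mem_nhds h0 h1] with x hx using (hg' x hx).deriv
    refine HasDerivAt.congr_of_eventuallyEq ?_ hev
    refine key.congr_deriv ?_
    rw [neg_neg, mul_neg, hbal, Real.rpow_sub hu, Real.rpow_two]
    field_simp
    ring
  · have := Real.rpow_pos_of_pos hu (α - 2)
    positivity
end

section
/- Let α > 0 and let P be a Borel probability measure on ℝ whose distribution function F_P(x) := P((-∞, x)) takes values in (0, 1) for all x ∈ ℝ. Then there exists a Borel probability measure P̃* on ℝ such that P̃*((-∞, x)) = (1 + ((1 − F_P(x))/F_P(x))^{1/(2α)})^{-1} for every x ∈ ℝ, and this distribution function of P̃* takes values in (0, 1). -/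
open MeasureTheory

/-!
With `β = 1 / (2α)`, the properized distribution function is `T ∘ F_P`, where
`T t = t ^ β / (t ^ β + (1 - t) ^ β)`. Unlike `(1 + ((1 - t) / t) ^ β)⁻¹`, this form of `T` is
continuous at the endpoints of `[0, 1]` too; it is monotone there and fixes `0` and `1`. Hence
`T ∘ cdf P` is right-continuous, monotone, and tends to `0` and `1` at `∓∞`, so it is the cdf of a
probability measure. The mass that measure gives to `Iio x` is the left limit of `T ∘ cdf P` at
`x`, which by continuity of `T` is `T` of the left limit of `cdf P`, that is `T (F_P x)`.
-/

open Filter Topology ProbabilityTheory Function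

/-- The distortion `t ↦ t ^ β / (t ^ β + (1 - t) ^ β)` of `[0, 1]`. -/
noncomputable def distort (β t : ℝ) : ℝ := t ^ β / (t ^ β + (1 - t) ^ β)

lemma distort_den_pos (β : ℝ) {t : ℝ} (ht : t ∈ Set.Icc (0 : ℝ) 1) :
    0 < t ^ β + (1 - t) ^ β := by
  rcases ht.1.eq_or_lt with h | h
  · subst h
    have := Real.rpow_nonneg (le_refl (0 : ℝ)) β
    simp only [sub_zero, Real.one_rpow]
    linarith
  · have h1 := Real.rpow_pos_of_pos h β
    have h2 := Real.rpow_nonneg (sub_nonneg.2 ht.2) β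
    linarith

lemma distort_continuousAt {β : ℝ} (hβ : 0 < β) {t : ℝ} (ht : t ∈ Set.Icc (0 : ℝ) 1) :
    ContinuousAt (distort β) t := by
  have h1 : Continuous fun s : ℝ => s ^ β := Real.continuous_rpow_const hβ.le
  have h2 : Continuous fun s : ℝ => (1 - s) ^ β := h1.comp (continuous_const.sub continuous_id)
  exact h1.continuousAt.div (h1.add h2).continuousAt (distort_den_pos β ht).ne'

lemma distort_mono {β : ℝ} (hβ : 0 < β) {s t : ℝ} (hs : s ∈ Set.Icc (0 : ℝ) 1)
    (ht : t ∈ Set.Icc (0 : ℝ) 1) (hst : s ≤ t) : distort β s ≤ distort β t := by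
  unfold distort
  rw [div_le_div_iff₀ (distort_den_pos β hs) (distort_den_pos β ht)]
  have h1 : s ^ β ≤ t ^ β := Real.rpow_le_rpow hs.1 hst hβ.le
  have h2 : (1 - t) ^ β ≤ (1 - s) ^ β :=
    Real.rpow_le_rpow (sub_nonneg.2 ht.2) (by linarith) hβ.le
  have h3 := mul_le_mul h1 h2 (Real.rpow_nonneg (sub_nonneg.2 ht.2) β)
    (Real.rpow_nonneg ht.1 β)
  linarith

lemma distort_eq (β : ℝ) {t : ℝ} (ht : t ∈ Set.Ioo (0 : ℝ) 1) :
    distort β t = (1 + ((1 - t) / t) ^ β)⁻¹ := by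
  have h := Real.rpow_pos_of_pos ht.1 β
  have h2 := Real.rpow_nonneg (sub_nonneg.2 ht.2.le) β
  rw [distort, Real.div_rpow (sub_nonneg.2 ht.2.le) ht.1.le]
  field_simp

theorem properized_measure_exists (α : ℝ) (hα : 0 < α)
    (P : Measure ℝ) [IsProbabilityMeasure P]
    (FP : ℝ → ℝ) (hFP : ∀ x, FP x = (P (Set.Iio x)).toReal)
    (hFP01 : ∀ x, FP x ∈ Set.Ioo (0 : ℝ) 1) :
    ∃ Ps : Measure ℝ, IsProbabilityMeasure Ps ∧
      (∀ x, (Ps (Set.Iio x)).toReal = (1 + ((1 - FP x) / FP x) ^ (1 / (2 * α)))⁻¹) ∧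
      (∀ x, (Ps (Set.Iio x)).toReal ∈ Set.Ioo (0 : ℝ) 1) := by
  set β : ℝ := 1 / (2 * α) with hβdef
  have hβ : 0 < β := by positivity
  have hmem : ∀ x, cdf P x ∈ Set.Icc (0 : ℝ) 1 := fun x => ⟨cdf_nonneg P x, cdf_le_one P x⟩
  let f : StieltjesFunction ℝ :=
    { toFun := fun x => distort β (cdf P x)
      mono' := fun x y h => distort_mono hβ (hmem x) (hmem y) ((cdf P).mono h)
      right_continuous' := fun x =>
        (distort_continuousAt hβ (hmem x)).comp_continuousWithinAt ((cdf P).right_continuous x) }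
  have hbot : Tendsto f atBot (𝓝 0) := by
    have h := (distort_continuousAt hβ (t := 0) (by simp)).tendsto.comp (tendsto_cdf_atBot P)
    have h0 : distort β 0 = 0 := by simp [distort, Real.zero_rpow hβ.ne']
    rwa [h0] at h
  have htop : Tendsto f atTop (𝓝 1) := by
    have h := (distort_continuousAt hβ (t := 1) (by simp)).tendsto.comp (tendsto_cdf_atTop P)
    have h1 : distort β 1 = 1 := by simp [distort, Real.zero_rpow hβ.ne']
    rwa [h1] at h
  have hleft : ∀ x, leftLim (cdf P) x = FP x := by
    intro x
    have h := (cdf P).measure_Iio (tendsto_cdf_atBot P) x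
    rw [measure_cdf, sub_zero] at h
    have hnn : 0 ≤ leftLim (cdf P) x :=
      (cdf_nonneg P (x - 1)).trans ((cdf P).mono.le_leftLim (by linarith))
    rw [hFP, h, ENNReal.toReal_ofReal hnn]
  have hfleft : ∀ x, leftLim f x = distort β (FP x) := by
    intro x
    refine tendsto_nhds_unique (f.mono.tendsto_leftLim x) ?_
    have h := (cdf P).mono.tendsto_leftLim x
    rw [hleft] at h
    exact (distort_continuousAt hβ ⟨(hFP01 x).1.le, (hFP01 x).2.le⟩).tendsto.comp h
  have hpos : ∀ x, 0 < (1 + ((1 - FP x) / FP x) ^ β)⁻¹ ∧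
      (1 + ((1 - FP x) / FP x) ^ β)⁻¹ < 1 := by
    intro x
    have h := Real.rpow_pos_of_pos (div_pos (sub_pos.2 (hFP01 x).2) (hFP01 x).1) β
    exact ⟨by positivity, inv_lt_one_of_one_lt₀ (by linarith)⟩
  have key : ∀ x, (f.measure (Set.Iio x)).toReal = (1 + ((1 - FP x) / FP x) ^ β)⁻¹ := by
    intro x
    rw [f.measure_Iio hbot, sub_zero, hfleft, distort_eq β (hFP01 x),
      ENNReal.toReal_ofReal (hpos x).1.le]
  exact ⟨f.measure, f.isProbabilityMeasure hbot htop, key, fun x => by rw [key]; exact hpos x⟩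
end

section
/- Let α > 0, let w : ℝ → (0, ∞) be measurable, and let P be a Borel probability measure on ℝ whose distribution function F_P(x) := P((-∞, x)) takes values in (0, 1). Write G(x) := (1 + ((1 − F_P(x))/F_P(x))^{1/(2α)})^{-1}. Then for every y ∈ ℝ (as Lebesgue integrals with values in [0, ∞]): ∫_ℝ |G(x) − 1_{y < x}|^{2α} / (G(x)^α (1 − G(x))^α) · w(x) dx = ∫_{(y,∞)} ((1 − F_P(x))/F_P(x))^{1/2} w(x) dx + ∫_{(-∞,y]} (F_P(x)/(1 − F_P(x)))^{1/2} w(x) dx; in particular this quantity does not depend on α. -/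
/-! With `r = (1 - F_P)/F_P` and `t = r ^ (1/(2α))`, the definition of `G` says that the odds of
`1 - G` against `G` are `(1 - G)/G = t`. The integrand is `((1 - G)/G)^α w = r^(1/2) w` for `x > y`
and `(G/(1 - G))^α w = (1/r)^(1/2) w` for `x ≤ y`, so the claim holds pointwise after splitting
`ℝ` into `(y, ∞)` and `(-∞, y]`. -/

open MeasureTheory

lemma rpow_two_mul_div {p q : ℝ} (hp : 0 < p) (hq : 0 < q) (α : ℝ) :
    p ^ (2 * α) / (q ^ α * p ^ α) = (p / q) ^ α := by
  have hpa := Real.rpow_pos_of_pos hp α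
  have hqa := Real.rpow_pos_of_pos hq α
  rw [Real.div_rpow hp.le hq.le, two_mul, Real.rpow_add hp]
  field_simp

lemma rpow_half_div_rpow {r α : ℝ} (hr : 0 < r) (hα : 0 < α) :
    (r ^ (1 / (2 * α))) ^ α = r ^ ((1 : ℝ) / 2) := by
  rw [← Real.rpow_mul hr.le]
  congr 1
  field_simp

/-- The properized score `S̃_{α,w}(P̃*, y)` equals
`∫_{(y,∞)} ((1-F_P)/F_P)^(1/2) w dx + ∫_{(-∞,y]} (F_P/(1-F_P))^(1/2) w dx`;
in particular it does not depend on `α`. -/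
theorem properized_score_formula (α : ℝ) (hα : 0 < α)
    (w : ℝ → ℝ) (hw : Measurable w) (hwpos : ∀ x, 0 < w x)
    (P : Measure ℝ) [IsProbabilityMeasure P]
    (FP : ℝ → ℝ) (hFP : ∀ x, FP x = (P (Set.Iio x)).toReal)
    (hFP01 : ∀ x, FP x ∈ Set.Ioo (0 : ℝ) 1)
    (G : ℝ → ℝ) (hG : ∀ x, G x = (1 + ((1 - FP x) / FP x) ^ (1 / (2 * α)))⁻¹) :
    ∀ y : ℝ,
      ∫⁻ x, ENNReal.ofReal
          (|G x - (if y < x then (1 : ℝ) else 0)| ^ (2 * α)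
            / ((G x) ^ α * (1 - G x) ^ α) * w x)
        = (∫⁻ x in Set.Ioi y,
              ENNReal.ofReal (((1 - FP x) / FP x) ^ ((1 : ℝ) / 2) * w x))
          + ∫⁻ x in Set.Iic y,
              ENNReal.ofReal ((FP x / (1 - FP x)) ^ ((1 : ℝ) / 2) * w x) := by
  intro y
  have key : ∀ x, 0 < (1 - FP x) / FP x ∧ 0 < G x ∧ 0 < 1 - G x ∧
      (1 - G x) / G x = ((1 - FP x) / FP x) ^ (1 / (2 * α)) := by
    intro x
    obtain ⟨h0, h1⟩ := hFP01 x
    have hr : 0 < (1 - FP x) / FP x := div_pos (sub_pos.2 h1) h0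
    have ht := Real.rpow_pos_of_pos hr (1 / (2 * α))
    rw [hG x]
    generalize ((1 - FP x) / FP x) ^ (1 / (2 * α)) = t at ht
    have e : 1 - (1 + t)⁻¹ = t / (1 + t) := by field_simp; ring
    refine ⟨hr, by positivity, by rw [e]; positivity, ?_⟩
    rw [e]
    field_simp
  rw [← lintegral_add_compl _ (measurableSet_Ioi (a := y)), Set.compl_Ioi]
  congr 1
  · refine setLIntegral_congr_fun measurableSet_Ioi fun x hx => ?_
    obtain ⟨hr, hg, hg1, ho⟩ := key x
    have hyx : y < x := hx
    simp only [if_pos hyx]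
    rw [abs_sub_comm, abs_of_pos hg1, rpow_two_mul_div hg1 hg, ho, rpow_half_div_rpow hr hα]
  · refine setLIntegral_congr_fun measurableSet_Iic fun x hx => ?_
    obtain ⟨hr, hg, hg1, ho⟩ := key x
    have hyx : ¬ y < x := not_lt.2 hx
    simp only [if_neg hyx]
    rw [sub_zero, abs_of_pos hg, mul_comm (G x ^ α), rpow_two_mul_div hg hg1,
      ← inv_div (1 - G x), ho, Real.inv_rpow (Real.rpow_pos_of_pos hr _).le,
      rpow_half_div_rpow hr hα, ← Real.inv_rpow hr.le, inv_div]
end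

section
/- Let α > 0, let w : ℝ → (0, ∞) be measurable, and let P be a Borel probability measure on ℝ whose distribution function F_P(x) := P((-∞, x)) takes values in (0, 1). Write G(x) := (1 + ((1 − F_P(x))/F_P(x))^{1/(2α)})^{-1}. Then (as Lebesgue integrals with values in [0, ∞]): ∫_ℝ ( ∫_ℝ |G(x) − 1_{y < x}|^{2α} / (G(x)^α (1 − G(x))^α) · w(x) dx ) dP(y) = 2 ∫_ℝ (F_P(x)(1 − F_P(x)))^{1/2} w(x) dx. -/
/-!
By Tonelli, it suffices to integrate the kernel over `y` for each fixed `x`. Put `p = F_P(x)` and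
`r = ((1 - p) / p) ^ (1 / (2α))`, so that `G(x) = 1 / (1 + r)` and `(1 - G(x)) / G(x) = r`.
On `{y < x}`, an event of probability `p`, the kernel equals
`((1 - G) / G) ^ α = r ^ α = √((1 - p) / p)`; on the complement, of probability `1 - p`, it equals
`√(p / (1 - p))`. Both events thus contribute `√(p (1 - p))`, whatever the value of `α`.
The two values of the kernel are `kernel_of_lt` and `kernel_of_ge`.
-/

open MeasureTheory

lemma rpow_two_mul_div_s11 {a b α : ℝ} (ha : 0 < a) (hb : 0 < b) :
    a ^ (2 * α) / (a ^ α * b ^ α) = (a / b) ^ α := by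
  have h1 : 0 < a ^ α := Real.rpow_pos_of_pos ha _
  have h2 : 0 < b ^ α := Real.rpow_pos_of_pos hb _
  rw [Real.div_rpow ha.le hb.le, two_mul, Real.rpow_add ha]
  field_simp

lemma rpow_half_rpow {t α : ℝ} (hα : 0 < α) (ht : 0 < t) :
    (t ^ (1 / (2 * α))) ^ α = t ^ ((1 : ℝ) / 2) := by
  rw [← Real.rpow_mul ht.le]
  congr 1
  field_simp

lemma kernel_of_lt {α p g : ℝ} (hα : 0 < α) (hp : p ∈ Set.Ioo (0 : ℝ) 1)
    (hg : g = (1 + ((1 - p) / p) ^ (1 / (2 * α)))⁻¹) :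
    |g - 1| ^ (2 * α) / (g ^ α * (1 - g) ^ α) = ((1 - p) / p) ^ ((1 : ℝ) / 2) := by
  have ht : 0 < (1 - p) / p := div_pos (sub_pos.2 hp.2) hp.1
  rw [← rpow_half_rpow hα ht]
  have hr := Real.rpow_pos_of_pos ht (1 / (2 * α))
  set r := ((1 - p) / p) ^ (1 / (2 * α))
  have hg0 : 0 < g := by rw [hg]; positivity
  have hg1 : 1 - g = r * g := by rw [hg]; field_simp; ring
  have hg2 : 0 < 1 - g := by rw [hg1]; positivity
  rw [abs_sub_comm, abs_of_pos hg2, mul_comm (g ^ α), rpow_two_mul_div_s11 hg2 hg0, hg1,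
    mul_div_cancel_right₀ _ hg0.ne']

lemma kernel_of_ge {α p g : ℝ} (hα : 0 < α) (hp : p ∈ Set.Ioo (0 : ℝ) 1)
    (hg : g = (1 + ((1 - p) / p) ^ (1 / (2 * α)))⁻¹) :
    |g - 0| ^ (2 * α) / (g ^ α * (1 - g) ^ α) = (p / (1 - p)) ^ ((1 : ℝ) / 2) := by
  have hq : 0 < 1 - p := sub_pos.2 hp.2
  have ht : 0 < (1 - p) / p := div_pos hq hp.1
  rw [← inv_div (1 - p) p, Real.inv_rpow ht.le, ← rpow_half_rpow hα ht]
  have hr := Real.rpow_pos_of_pos ht (1 / (2 * α))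
  set r := ((1 - p) / p) ^ (1 / (2 * α))
  have hg0 : 0 < g := by rw [hg]; positivity
  have hg1 : 1 - g = r * g := by rw [hg]; field_simp; ring
  have hg2 : 0 < 1 - g := by rw [hg1]; positivity
  rw [sub_zero, abs_of_pos hg0, rpow_two_mul_div_s11 hg0 hg2, hg1, ← Real.inv_rpow hr.le]
  congr 1
  field_simp

/-- A half-odds ratio weighted by its probability is the geometric mean `√(a b)`. -/
lemma rpow_half_div_mul {a b : ℝ} (ha : 0 < a) (hb : 0 < b) :
    (b / a) ^ ((1 : ℝ) / 2) * a = (a * b) ^ ((1 : ℝ) / 2) := by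
  rw [← Real.sqrt_eq_rpow, ← Real.sqrt_eq_rpow, Real.sqrt_div hb.le, Real.sqrt_mul ha.le]
  have h := Real.sqrt_pos.2 ha
  field_simp
  rw [Real.sq_sqrt ha.le]

/-- The expected properized score under `P` itself equals
`2 ∫ (F_P (1 - F_P))^(1/2) w dx`. -/
theorem expected_properized_score (α : ℝ) (hα : 0 < α)
    (w : ℝ → ℝ) (hw : Measurable w) (hwpos : ∀ x, 0 < w x)
    (P : Measure ℝ) [IsProbabilityMeasure P]
    (FP : ℝ → ℝ) (hFP : ∀ x, FP x = (P (Set.Iio x)).toReal)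
    (hFP01 : ∀ x, FP x ∈ Set.Ioo (0 : ℝ) 1)
    (G : ℝ → ℝ) (hG : ∀ x, G x = (1 + ((1 - FP x) / FP x) ^ (1 / (2 * α)))⁻¹) :
    ∫⁻ y, (∫⁻ x, ENNReal.ofReal
        (|G x - (if y < x then (1 : ℝ) else 0)| ^ (2 * α)
          / ((G x) ^ α * (1 - G x) ^ α) * w x)) ∂P
      = 2 * ∫⁻ x, ENNReal.ofReal ((FP x * (1 - FP x)) ^ ((1 : ℝ) / 2) * w x) := by
  have hmono : Monotone FP := fun a b hab => by
    rw [hFP, hFP]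
    exact ENNReal.toReal_mono (measure_ne_top _ _) (measure_mono (Set.Iio_subset_Iio hab))
  have hFm : Measurable FP := hmono.measurable
  have hGm : Measurable G := by
    rw [funext hG]
    fun_prop
  rw [lintegral_lintegral_swap]
  · rw [← lintegral_const_mul _ (by fun_prop)]
    refine lintegral_congr fun x => ?_
    have hp := hFP01 x
    have hq : 0 < 1 - FP x := sub_pos.2 hp.2
    have hPlt : P (Set.Iio x) = ENNReal.ofReal (FP x) := by
      rw [hFP, ENNReal.ofReal_toReal (measure_ne_top _ _)]
    have hPge : P (Set.Iio x)ᶜ = ENNReal.ofReal (1 - FP x) := by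
      rw [prob_compl_eq_one_sub measurableSet_Iio, hPlt, ENNReal.ofReal_sub _ hp.1.le,
        ENNReal.ofReal_one]
    rw [← lintegral_add_compl _ (measurableSet_Iio (a := x)),
      setLIntegral_congr_fun (g := fun _ =>
        ENNReal.ofReal (((1 - FP x) / FP x) ^ ((1 : ℝ) / 2) * w x)) measurableSet_Iio
        (fun y hy => by
          have hy' : y < x := hy
          simp only [if_pos hy']
          rw [kernel_of_lt hα hp (hG x)]),
      setLIntegral_congr_fun (g := fun _ =>
        ENNReal.ofReal ((FP x / (1 - FP x)) ^ ((1 : ℝ) / 2) * w x)) measurableSet_Iio.compl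
        (fun y hy => by
          have hy' : ¬ y < x := hy
          simp only [if_neg hy']
          rw [kernel_of_ge hα hp (hG x)]),
      setLIntegral_const, setLIntegral_const, hPlt, hPge, ← ENNReal.ofReal_mul' hp.1.le,
      ← ENNReal.ofReal_mul' hq.le, mul_right_comm, rpow_half_div_mul hp.1 hq, mul_right_comm,
      rpow_half_div_mul hq hp.1, mul_comm (1 - FP x), two_mul]
  · have hind : Measurable fun z : ℝ × ℝ => if z.1 < z.2 then (1 : ℝ) else 0 :=
      Measurable.ite (measurableSet_lt measurable_fst measurable_snd) measurable_const
        measurable_const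
    refine Measurable.aemeasurable ?_
    simp only [Function.uncurry_def]
    fun_prop
end

section
/- Let α > 0, let w : ℝ → (0, ∞) be measurable, and let P and Q be Borel probability measures on ℝ whose distribution functions F_P(x) := P((-∞, x)) and F_Q(x) := Q((-∞, x)) take values in (0, 1). Then (as Lebesgue integrals with values in [0, ∞]): 2 ∫_ℝ (F_Q(x)(1 − F_Q(x)))^{1/2} w(x) dx ≤ ∫_ℝ [ ((1 − F_P(x))/F_P(x))^{1/2} · F_Q(x) + (F_P(x)/(1 − F_P(x)))^{1/2} · (1 − F_Q(x)) ] w(x) dx. (This is the properness of the properized scoring rule S̃*_{α,w} relative to the class of probability measures with distribution function taking values in (0,1).) -/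
open MeasureTheory

/-!
The inequality holds pointwise, by AM-GM: writing `r = ((1 - p) / p) ^ (1/2)`, one has
`(p / (1 - p)) ^ (1/2) = r⁻¹`, and `r * q` and `r⁻¹ * (1 - q)` have product `q * (1 - q)`, so
their sum is at least `2 * (q * (1 - q)) ^ (1/2)`. Multiplying by the weight and integrating
gives the theorem, by monotonicity of the lower Lebesgue integral.
-/

theorem two_mul_rpow_half_le {p q : ℝ} (hp : p ∈ Set.Ioo (0 : ℝ) 1)
    (hq : q ∈ Set.Ioo (0 : ℝ) 1) :
    2 * (q * (1 - q)) ^ ((1 : ℝ) / 2)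
      ≤ ((1 - p) / p) ^ ((1 : ℝ) / 2) * q + (p / (1 - p)) ^ ((1 : ℝ) / 2) * (1 - q) := by
  obtain ⟨hp0, hp1⟩ := hp
  obtain ⟨hq0, hq1⟩ := hq
  have hp1' : 0 < 1 - p := sub_pos.2 hp1
  have hq1' : 0 < 1 - q := sub_pos.2 hq1
  simp only [← Real.sqrt_eq_rpow]
  have hab : √((1 - p) / p) * √(p / (1 - p)) = 1 := by
    rw [← Real.sqrt_mul (by positivity), div_mul_div_cancel₀ hp0.ne', div_self hp1'.ne',
      Real.sqrt_one]
  have hs : √(q * (1 - q)) ^ 2 = q * (1 - q) := Real.sq_sqrt (by positivity)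
  have ha := Real.sqrt_nonneg ((1 - p) / p)
  have hb := Real.sqrt_nonneg (p / (1 - p))
  generalize √((1 - p) / p) = a at *
  generalize √(p / (1 - p)) = b at *
  refine le_of_pow_le_pow_left₀ two_ne_zero (by positivity) ?_
  calc (2 * √(q * (1 - q))) ^ 2 = 4 * (a * b) * (q * (1 - q)) := by
        rw [mul_pow, hs, hab]; ring
    _ ≤ (a * q + b * (1 - q)) ^ 2 := by nlinarith [sq_nonneg (a * q - b * (1 - q))]

/-- Properness of the properized scoring rule `S̃*_{α,w}`: for distribution functions
`F_P, F_Q` with values in `(0,1)`,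
`2 ∫ (F_Q(1-F_Q))^(1/2) w dx ≤ ∫ [((1-F_P)/F_P)^(1/2) F_Q + (F_P/(1-F_P))^(1/2) (1-F_Q)] w dx`. -/
theorem properized_score_proper (α : ℝ) (hα : 0 < α)
    (w : ℝ → ℝ) (hw : Measurable w) (hwpos : ∀ x, 0 < w x)
    (P Q : Measure ℝ) [IsProbabilityMeasure P] [IsProbabilityMeasure Q]
    (FP FQ : ℝ → ℝ)
    (hFP : ∀ x, FP x = (P (Set.Iio x)).toReal)
    (hFQ : ∀ x, FQ x = (Q (Set.Iio x)).toReal)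
    (hFP01 : ∀ x, FP x ∈ Set.Ioo (0 : ℝ) 1)
    (hFQ01 : ∀ x, FQ x ∈ Set.Ioo (0 : ℝ) 1) :
    2 * ∫⁻ x, ENNReal.ofReal ((FQ x * (1 - FQ x)) ^ ((1 : ℝ) / 2) * w x)
      ≤ ∫⁻ x, ENNReal.ofReal
          ((((1 - FP x) / FP x) ^ ((1 : ℝ) / 2) * FQ x
            + (FP x / (1 - FP x)) ^ ((1 : ℝ) / 2) * (1 - FQ x)) * w x) := by
  rw [← lintegral_const_mul' 2 _ ENNReal.ofNat_ne_top]
  refine lintegral_mono fun x => ?_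
  rw [← ENNReal.ofReal_ofNat 2, ← ENNReal.ofReal_mul zero_le_two, ← mul_assoc]
  exact ENNReal.ofReal_le_ofReal (mul_le_mul_of_nonneg_right
    (two_mul_rpow_half_le (hFP01 x) (hFQ01 x)) (hwpos x).le)
end

section
/- Let P and Q be Borel probability measures on ℝ whose distribution functions F_P(x) := P((-∞, x)) and F_Q(x) := Q((-∞, x)) are continuous on ℝ and take values in (0, 1), and suppose that ∫_ℝ (F_Q(x)(1 − F_Q(x)))^{1/2} dx < ∞. If ∫_ℝ [ ((1 − F_P(x))/F_P(x))^{1/2} · F_Q(x) + (F_P(x)/(1 − F_P(x)))^{1/2} · (1 − F_Q(x)) ] dx = 2 ∫_ℝ (F_Q(x)(1 − F_Q(x)))^{1/2} dx, then F_P(x) = F_Q(x) for all x ∈ ℝ (and hence P = Q). In other words, for constant weight w ≡ 1 the properized scoring rule S̃*_{α,w} is strictly proper relative to the class of probability measures on ℝ with continuous distribution function taking values in (0,1) and finite expected score. -/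
/-!
The score at `P` under `Q` is minimal pointwise, by AM-GM: for `p, q ∈ (0, 1)` the integrand
exceeds `2 √(q (1 - q))` by `(√(1 - p) √q - √p √(1 - q))² / (√p √(1 - p))`, which vanishes only if
`p = q` (`score_gap`, `score_eq_iff`). Since the minimal integral is finite, equality of the
integrals forces equality of the integrands almost everywhere, so `F_P = F_Q` almost everywhere,
hence everywhere by continuity. The intervals `(-∞, x)` are a π-system generating the Borel sets,
so `P = Q`.
-/

open MeasureTheory

lemma score_gap {p q : ℝ} (hp : p ∈ Set.Ioo (0 : ℝ) 1) (hq : q ∈ Set.Ioo (0 : ℝ) 1) :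
    ((1 - p) / p) ^ ((1 : ℝ) / 2) * q + (p / (1 - p)) ^ ((1 : ℝ) / 2) * (1 - q)
      = 2 * (q * (1 - q)) ^ ((1 : ℝ) / 2)
        + (√(1 - p) * √q - √p * √(1 - q)) ^ 2 / (√p * √(1 - p)) := by
  obtain ⟨hp0, hp1⟩ := hp
  obtain ⟨hq0, hq1⟩ := hq
  have hp1' : 0 < 1 - p := by linarith
  have hq1' : 0 < 1 - q := by linarith
  simp only [← Real.sqrt_eq_rpow]
  rw [Real.sqrt_div hp1'.le, Real.sqrt_div hp0.le, Real.sqrt_mul hq0.le]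
  have hs := Real.sqrt_pos.2 hp0
  have ht := Real.sqrt_pos.2 hp1'
  have hu := Real.sq_sqrt hq0.le
  have hv := Real.sq_sqrt hq1'.le
  field_simp
  linear_combination (-√(1 - p) ^ 2) * hu - √p ^ 2 * hv

lemma score_eq_iff {p q : ℝ} (hp : p ∈ Set.Ioo (0 : ℝ) 1) (hq : q ∈ Set.Ioo (0 : ℝ) 1) :
    ((1 - p) / p) ^ ((1 : ℝ) / 2) * q + (p / (1 - p)) ^ ((1 : ℝ) / 2) * (1 - q)
      = 2 * (q * (1 - q)) ^ ((1 : ℝ) / 2) ↔ p = q := by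
  rw [score_gap hp hq, add_eq_left]
  obtain ⟨hp0, hp1⟩ := hp
  obtain ⟨hq0, hq1⟩ := hq
  have hp1' : 0 < 1 - p := by linarith
  have hq1' : 0 < 1 - q := by linarith
  have hs := Real.sqrt_pos.2 hp0
  have ht := Real.sqrt_pos.2 hp1'
  rw [div_eq_zero_iff, or_iff_left (mul_pos hs ht).ne', sq_eq_zero_iff, sub_eq_zero,
    ← Real.sqrt_mul hp1'.le, ← Real.sqrt_mul hp0.le,
    Real.sqrt_inj (mul_pos hp1' hq0).le (mul_pos hp0 hq1').le]
  constructor <;> intro h <;> linarith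

/-- Strict properness (Remark 1 (i)): for `P, Q` with continuous distribution functions with
values in `(0,1)` and finite expected score, equality of the expected properized score of `P`
under `Q` with that of `Q` under `Q` forces `F_P = F_Q` and hence `P = Q`. -/
theorem properized_score_strictly_proper
    (P Q : Measure ℝ) [IsProbabilityMeasure P] [IsProbabilityMeasure Q]
    (FP FQ : ℝ → ℝ)
    (hFP : ∀ x, FP x = (P (Set.Iio x)).toReal)
    (hFQ : ∀ x, FQ x = (Q (Set.Iio x)).toReal)
    (hFPc : Continuous FP) (hFQc : Continuous FQ)
    (hFP01 : ∀ x, FP x ∈ Set.Ioo (0 : ℝ) 1)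
    (hFQ01 : ∀ x, FQ x ∈ Set.Ioo (0 : ℝ) 1)
    (hfin : ∫⁻ x, ENNReal.ofReal ((FQ x * (1 - FQ x)) ^ ((1 : ℝ) / 2)) < ⊤)
    (heq : ∫⁻ x, ENNReal.ofReal
            (((1 - FP x) / FP x) ^ ((1 : ℝ) / 2) * FQ x
              + (FP x / (1 - FP x)) ^ ((1 : ℝ) / 2) * (1 - FQ x))
          = 2 * ∫⁻ x, ENNReal.ofReal ((FQ x * (1 - FQ x)) ^ ((1 : ℝ) / 2))) :
    (∀ x, FP x = FQ x) ∧ P = Q := by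
  have hmP := hFPc.measurable
  have hmQ := hFQc.measurable
  have hnn : ∀ x, 0 ≤ (FQ x * (1 - FQ x)) ^ ((1 : ℝ) / 2) := fun x =>
    Real.rpow_nonneg (mul_nonneg (hFQ01 x).1.le (sub_nonneg.2 (hFQ01 x).2.le)) _
  have hge : ∀ x, 2 * (FQ x * (1 - FQ x)) ^ ((1 : ℝ) / 2)
      ≤ ((1 - FP x) / FP x) ^ ((1 : ℝ) / 2) * FQ x
        + (FP x / (1 - FP x)) ^ ((1 : ℝ) / 2) * (1 - FQ x) := fun x => by
    rw [score_gap (hFP01 x) (hFQ01 x)]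
    exact le_add_of_nonneg_right (by positivity)
  have hmin : ∫⁻ x, ENNReal.ofReal (2 * (FQ x * (1 - FQ x)) ^ ((1 : ℝ) / 2))
      = 2 * ∫⁻ x, ENNReal.ofReal ((FQ x * (1 - FQ x)) ^ ((1 : ℝ) / 2)) := by
    rw [← lintegral_const_mul _ (by fun_prop)]
    simp [ENNReal.ofReal_mul]
  have hae := ae_eq_of_ae_le_of_lintegral_le
    (Filter.Eventually.of_forall fun x => ENNReal.ofReal_le_ofReal (hge x))
    (by rw [hmin]; exact ENNReal.mul_ne_top (by simp) hfin.ne)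
    (by fun_prop) (heq.trans hmin.symm).le
  have hF : FP =ᵐ[volume] FQ := by
    filter_upwards [hae] with x hx
    have h2 : 0 ≤ 2 * (FQ x * (1 - FQ x)) ^ ((1 : ℝ) / 2) := mul_nonneg zero_le_two (hnn x)
    exact (score_eq_iff (hFP01 x) (hFQ01 x)).1
      ((ENNReal.ofReal_eq_ofReal_iff h2 (h2.trans (hge x))).1 hx).symm
  have hFeq : FP = FQ := (hFPc.ae_eq_iff_eq volume hFQc).1 hF
  refine ⟨congrFun hFeq, ?_⟩
  refine ext_of_generate_finite _ (borel_eq_generateFrom_Iio ℝ ▸ BorelSpace.measurable_eq)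
    isPiSystem_Iio ?_ (by simp)
  rintro _ ⟨x, rfl⟩
  have h := congrFun hFeq x
  rw [hFP, hFQ] at h
  exact (ENNReal.toReal_eq_toReal_iff' (measure_ne_top _ _) (measure_ne_top _ _)).1 h
end

section
/- Let F : ℝ → ℝ be the Gumbel distribution function F(x) := exp(−exp(−x)). Then ∫_ℝ (F(x)(1 − F(x)))^{1/2} dx < ∞; that is, the expected value S̃_{α,w}(P̃*, P) = 2 ∫_ℝ (F(x)(1 − F(x)))^{1/2} dx of the properized score with constant weight w ≡ 1 is finite for the Gumbel distribution. -/
open MeasureTheory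

/-!
The function `F (1 - F)` is bounded by `exp x` (because `F ≤ exp x`, from `-x ≤ exp (-x)`) and by
`exp (-x)` (because `1 - F ≤ exp (-x)`, from `1 - y ≤ exp (-y)` at `y = exp (-x)`).
Its square root is therefore at most `exp (x / 2)` on `(-∞, 0]` and at most `exp (-x / 2)` on
`(0, ∞)`, and both are integrable there.
-/

/-- For the Gumbel distribution function `F(x) = exp(-exp(-x))`, the integral
`∫ (F(x)(1-F(x)))^(1/2) dx` is finite. -/
theorem gumbel_finite_expected_score
    (F : ℝ → ℝ) (hF : ∀ x, F x = Real.exp (-Real.exp (-x))) :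
    ∫⁻ x, ENNReal.ofReal ((F x * (1 - F x)) ^ ((1 : ℝ) / 2)) < ⊤ := by
  have hpos : ∀ x, 0 < F x := fun x => hF x ▸ Real.exp_pos _
  have hle_one : ∀ x, F x ≤ 1 := fun x => by
    rw [hF, Real.exp_le_one_iff]
    exact neg_nonpos.2 (Real.exp_pos _).le
  have hle_exp : ∀ x, F x ≤ Real.exp x := fun x => by
    rw [hF, Real.exp_le_exp]
    linarith [Real.add_one_le_exp (-x)]
  have hsub_le : ∀ x, 1 - F x ≤ Real.exp (-x) := fun x => by
    rw [hF]
    linarith [Real.add_one_le_exp (-Real.exp (-x))]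
  have hsqrt : ∀ x t, F x * (1 - F x) ≤ Real.exp t →
      (F x * (1 - F x)) ^ ((1 : ℝ) / 2) ≤ Real.exp (t * (1 / 2)) := fun x t h => by
    rw [Real.exp_mul]
    exact Real.rpow_le_rpow (mul_nonneg (hpos x).le (sub_nonneg.2 (hle_one x))) h (by norm_num)
  have hleft : IntegrableOn (fun x : ℝ => Real.exp (1 / 2 * x)) (Set.Iic 0) :=
    integrableOn_exp_mul_Iic (by norm_num) 0
  have hright : IntegrableOn (fun x : ℝ => Real.exp (-(1 / 2) * x)) (Set.Ioi 0) :=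
    integrableOn_exp_mul_Ioi (by norm_num) 0
  rw [← lintegral_add_compl _ (measurableSet_Iic (a := (0 : ℝ))), Set.compl_Iic]
  refine ENNReal.add_lt_top.2 ⟨?_, ?_⟩
  · refine lt_of_le_of_lt (lintegral_mono fun x => ENNReal.ofReal_le_ofReal ?_)
      hleft.lintegral_lt_top
    rw [mul_comm (1 / 2) x]
    exact hsqrt x x (by nlinarith [hpos x, hle_one x, hle_exp x])
  · refine lt_of_le_of_lt (lintegral_mono fun x => ENNReal.ofReal_le_ofReal ?_)
      hright.lintegral_lt_top
    rw [show -(1 / 2) * x = -x * (1 / 2) by ring]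
    exact hsqrt x (-x) (by nlinarith [hpos x, hle_one x, hsub_le x])
end

section
/- Let F : ℝ → ℝ be the Laplace distribution function, F(x) := (1/2)·exp(x) for x ≤ 0 and F(x) := 1 − (1/2)·exp(−x) for x > 0. Then ∫_ℝ (F(x)(1 − F(x)))^{1/2} dx < ∞; that is, the expected value S̃_{α,w}(P̃*, P) = 2 ∫_ℝ (F(x)(1 − F(x)))^{1/2} dx of the properized score with constant weight w ≡ 1 is finite for the Laplace distribution. -/
/-!
The product `F (1 - F)` of the Laplace distribution function with its complement is at most
`exp (-|x|)`: on each half-line one of the two factors is `exp (-|x|) / 2` and the other lies in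
`[0, 1]`. Its square root is therefore dominated by `exp (-|x| / 2)`, which is integrable on each
of the two half-lines.
-/

open MeasureTheory

/-- For the Laplace distribution function `F(x) = (1/2)exp(x)` for `x ≤ 0`,
`F(x) = 1 - (1/2)exp(-x)` for `x > 0`, the integral `∫ (F(x)(1-F(x)))^(1/2) dx` is finite. -/
theorem laplace_finite_expected_score
    (F : ℝ → ℝ)
    (hF : ∀ x, F x = if x ≤ 0 then (1 / 2) * Real.exp x else 1 - (1 / 2) * Real.exp (-x)) :
    ∫⁻ x, ENNReal.ofReal ((F x * (1 - F x)) ^ ((1 : ℝ) / 2)) < ⊤ := by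
  rw [← lintegral_add_compl _ (measurableSet_Iic (a := (0 : ℝ))), Set.compl_Iic]
  refine ENNReal.add_lt_top.2 ⟨?_, ?_⟩
  · refine lt_of_le_of_lt (setLIntegral_mono' measurableSet_Iic fun x hx => ?_)
      (integrableOn_exp_mul_Iic (a := 1 / 2) (by norm_num) 0).lintegral_lt_top
    have hx' : x ≤ 0 := hx
    have h1 := Real.exp_pos x
    have h2 : Real.exp x ≤ 1 := Real.exp_le_one_iff.2 hx'
    rw [hF, if_pos hx', show (1 / 2 : ℝ) * x = x * (1 / 2) by ring, Real.exp_mul]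
    exact ENNReal.ofReal_le_ofReal
      (Real.rpow_le_rpow (by nlinarith) (by nlinarith) (by norm_num))
  · refine lt_of_le_of_lt (setLIntegral_mono' measurableSet_Ioi fun x hx => ?_)
      (integrableOn_exp_mul_Ioi (a := -(1 / 2)) (by norm_num) 0).lintegral_lt_top
    have hx' : 0 < x := hx
    have h1 := Real.exp_pos (-x)
    have h2 : Real.exp (-x) ≤ 1 := Real.exp_le_one_iff.2 (by linarith)
    rw [hF, if_neg hx'.not_ge, show -(1 / 2 : ℝ) * x = -x * (1 / 2) by ring, Real.exp_mul]
    exact ENNReal.ofReal_le_ofReal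
      (Real.rpow_le_rpow (by nlinarith) (by nlinarith) (by norm_num))
end
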